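/- I(θ) = L(θ)/L̃(θ) → 1 as θ → ∞; equivalently, L(θ) · (det(I + Σ Λ(θ)))^{1/2} · exp{−(1 − (1/2) x*(θ))ᵀ D x*(θ)} → 1 as θ → ∞. -/

import Mathlib

open Real Matrix Filter MeasureTheory

/-!
Translating the integral to the saddle point `x*(θ)` and rescaling coordinate `i` by
`sᵢ = (1 + λᵢ)^(-1/2)`, with `λ` the diagonal of `Λ(θ)`, writes `I(θ)` as a quotient of two
integrals which are continuous in `s` on the closed unit cube and agree at its vertices. Hence it
suffices that along every ultrafilter `θ → ∞` each `λᵢ` tends to `0` or to `∞`.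

This dichotomy follows from the saddle point equation, in the form `Σ λ + log λ = log θ + μ`.
After moving the vanishing `λᵢ` to the right hand side, suppose some `λ_b` stays bounded away from
`0` and `∞`, and let `λ_j` be the slowest of the diverging ones. A combination `q` of the equations
with `p = Σ q` constant on classes of equal growth gives `p ⬝ λ = log λ_j - log λ_b + O(1)`, which
is `o(λ_j)`. Since `λ ≥ 0`, the leading class of `p ⬝ λ` cannot cancel, so `p` vanishes at every
diverging coordinate. Then `p ⬝ λ`, and with it `log λ_j`, is bounded, a contradiction.
-/

open Asymptotics
open scoped Topology

section UltrafilterAsymptotics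

variable {α ι : Type*}

lemma isBigO_or_isLittleO_ultrafilter {E F : Type*} [Norm E] [Norm F] (U : Ultrafilter α)
    (f : α → E) (g : α → F) : f =O[U] g ∨ g =o[U] f := by
  refine or_iff_not_imp_left.2 fun hfg => isLittleO_iff.2 fun c hc => ?_
  have hbound : ¬ ∀ᶠ a in U, ‖f a‖ ≤ c⁻¹ * ‖g a‖ := fun h => hfg (.of_bound _ h)
  filter_upwards [Ultrafilter.eventually_not.2 hbound] with a ha
  exact ((inv_mul_lt_iff₀ hc).1 (not_le.1 ha)).le

lemma exists_mem_eventually_forall_mem_le {β : Type*} [LinearOrder β] (U : Ultrafilter α)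
    {s : Finset ι} (hs : s.Nonempty) (f : α → ι → β) :
    ∃ j ∈ s, ∀ᶠ a in U, ∀ i ∈ s, f a j ≤ f a i :=
  (Ultrafilter.eventually_exists_mem_iff s.finite_toSet).1 <|
    .of_forall fun a => s.exists_min_image (f a) hs

lemma log_sub_log_isBigO_one_of_isTheta {l : Filter α} {f g : α → ℝ} (h : f =Θ[l] g) :
    (fun a => log (f a) - log (g a)) =O[l] (1 : α → ℝ) := by
  obtain ⟨C, hC, hfg⟩ := h.isBigO.exists_pos
  obtain ⟨K, hK, hgf⟩ := h.isBigO_symm.exists_pos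
  refine .of_bound (max |log C| |log K|) ?_
  filter_upwards [hfg.bound, hgf.bound] with a hf hg
  rcases eq_or_ne (f a) 0 with hf0 | hf0
  · have hg0 : g a = 0 := by simpa [hf0] using hg
    simp [hf0, hg0]
  · have hg0 : g a ≠ 0 := fun hg0 => hf0 (by simpa [hg0] using hf)
    have hlogf : log (f a) ≤ log C + log (g a) := by
      rw [← log_abs (f a), ← log_abs (g a), ← log_mul hC.ne' (abs_ne_zero.2 hg0)]
      exact log_le_log (abs_pos.2 hf0) hf
    have hlogg : log (g a) ≤ log K + log (f a) := by
      rw [← log_abs (f a), ← log_abs (g a), ← log_mul hK.ne' (abs_ne_zero.2 hf0)]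
      exact log_le_log (abs_pos.2 hg0) hg
    rw [Pi.one_apply, norm_one, mul_one, Real.norm_eq_abs, abs_le']
    exact ⟨le_max_of_le_left (by linarith [le_abs_self (log C)]),
      le_max_of_le_right (by linarith [le_abs_self (log K)])⟩

/-- `p` takes the same value at indices whose coordinates of `v` have the same order of growth
along `l`. -/
def ConstOnGrowthClasses (l : Filter α) (v : α → ι → ℝ) (p : ι → ℝ) : Prop :=
  ∀ i k, (v · i) =Θ[l] (v · k) → p i = p k

lemma ConstOnGrowthClasses.isBigO_dotProduct [Fintype ι] {U : Ultrafilter α} {v : α → ι → ℝ}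
    {p : ι → ℝ} (hp : ConstOnGrowthClasses U v p) (hv : ∀ᶠ a in U, ∀ i, 0 ≤ v a i)
    {i : ι} (hi : p i ≠ 0) : (v · i) =O[U] fun a => p ⬝ᵥ v a := by
  classical
  obtain ⟨m, hm, hmax⟩ := exists_mem_eventually_forall_mem_le (β := ℝᵒᵈ) U
    (s := {k | p k ≠ 0}) ⟨i, by simpa using hi⟩ (fun a k => OrderDual.toDual (v a k))
  simp only [Finset.mem_filter_univ, OrderDual.toDual_le_toDual] at hm hmax
  have hle_max : ∀ k, p k ≠ 0 → (v · k) =O[U] (v · m) := fun k hk => by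
    refine .of_bound 1 ?_
    filter_upwards [hv, hmax] with a ha hma
    simpa [abs_of_nonneg (ha _)] using hma k hk
  set top : Finset ι := {k | (v · k) =Θ[U] (v · m)} with htop
  have htop_ge : (v · m) =O[U] fun a => ∑ k ∈ top, p k * v a k := by
    refine .of_bound |p m|⁻¹ ?_
    filter_upwards [hv] with a ha
    have hsum : ∑ k ∈ top, p k * v a k = p m * ∑ k ∈ top, v a k := by
      rw [Finset.mul_sum]
      exact Finset.sum_congr rfl fun k hk => by rw [hp k m (by simpa [htop] using hk)]
    rw [hsum, norm_mul, ← mul_assoc, Real.norm_eq_abs (p m), inv_mul_cancel₀ (abs_ne_zero.2 hm),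
      one_mul, Real.norm_of_nonneg (ha m),
      Real.norm_of_nonneg (Finset.sum_nonneg fun k _ => ha k)]
    exact Finset.single_le_sum (fun k _ => ha k) (by simp [htop, isTheta_refl])
  have hrest : (fun a => ∑ k ∈ topᶜ, p k * v a k) =o[U] (v · m) := by
    refine .fun_sum fun k hk => ?_
    by_cases hpk : p k = 0
    · simp only [hpk, zero_mul]
      exact isLittleO_zero _ _
    · refine .const_mul_left ((isBigO_or_isLittleO_ultrafilter U _ _).resolve_left fun hmk => ?_) _
      exact (by simpa [htop] using hk : ¬ (v · k) =Θ[U] (v · m)) ⟨hle_max k hpk, hmk⟩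
  have hsplit : (fun a => p ⬝ᵥ v a) =
      (fun a => ∑ k ∈ topᶜ, p k * v a k) + fun a => ∑ k ∈ top, p k * v a k :=
    funext fun a => (Finset.sum_compl_add_sum top _).symm
  rw [hsplit]
  exact (hle_max i hi).trans (htop_ge.trans (hrest.trans_isBigO htop_ge).right_isBigO_add)

end UltrafilterAsymptotics

section GrowthDichotomy

variable {α ι : Type*} [Fintype ι]

lemma exists_mulVec_eq_comp_and_dotProduct_comp {κ : Type*} [Fintype κ] {M : Matrix ι ι ℝ}
    (hM : M.PosDef) {lev : ι → κ} (hlev : Function.Surjective lev) (d : κ → ℝ) :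
    ∃ (q : ι → ℝ) (p : κ → ℝ), M *ᵥ q = p ∘ lev ∧ ∀ c : κ → ℝ, q ⬝ᵥ (c ∘ lev) = d ⬝ᵥ c := by
  classical
  let L : Matrix ι κ ℝ := (1 : Matrix κ κ ℝ).submatrix lev id
  have hL : ∀ c, L *ᵥ c = c ∘ lev := fun c => by
    ext i
    simp [L, Matrix.mulVec, dotProduct, Matrix.one_apply]
  have hLinj : Function.Injective L.mulVec := fun c c' h => by
    rwa [hL, hL, hlev.injective_comp_right.eq_iff] at h
  have hA : (Lᵀ * M⁻¹ * L).PosDef := by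
    simpa using hM.inv.conjTranspose_mul_mul_same hLinj
  set A := Lᵀ * M⁻¹ * L
  let p := A⁻¹ *ᵥ d
  have hMinv : M * M⁻¹ = 1 := Matrix.mul_nonsing_inv M hM.det_pos.ne'.isUnit
  have hAinv : A * A⁻¹ = 1 := Matrix.mul_nonsing_inv A hA.det_pos.ne'.isUnit
  refine ⟨M⁻¹ *ᵥ (L *ᵥ p), p, by rw [mulVec_mulVec, hMinv, one_mulVec, hL], fun c => ?_⟩
  have hLq : Lᵀ *ᵥ (M⁻¹ *ᵥ (L *ᵥ p)) = d := by
    have : Lᵀ *ᵥ (M⁻¹ *ᵥ (L *ᵥ p)) = (A * A⁻¹) *ᵥ d := by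
      simp only [A, p, mulVec_mulVec, Matrix.mul_assoc]
    rw [this, hAinv, one_mulVec]
  rw [← hL, dotProduct_mulVec, ← mulVec_transpose, hLq]

lemma isBigO_one_dotProduct {l : Filter α} {r : α → ι → ℝ} (hr : ∀ i, (r · i) =O[l] (1 : α → ℝ))
    (q : ι → ℝ) : (fun a => q ⬝ᵥ r a) =O[l] (1 : α → ℝ) :=
  .fun_sum fun i _ => (hr i).const_mul_left _

lemma exists_constOnGrowthClasses_dotProduct_sub_log_isBigO {l : Filter α} {S : Matrix ι ι ℝ}
    (hS : S.PosDef) {v : α → ι → ℝ} {t : α → ℝ}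
    (h : ∀ i, (fun a => (S *ᵥ v a) i + log (v a i) - t a) =O[l] (1 : α → ℝ)) (b j : ι) :
    ∃ p : ι → ℝ, ConstOnGrowthClasses l v p ∧
      (fun a => p ⬝ᵥ v a - (log (v a j) - log (v a b))) =O[l] (1 : α → ℝ) := by
  classical
  let level : Setoid ι :=
    ⟨fun i k => (v · i) =Θ[l] (v · k), fun _ => isTheta_refl _ _, fun h => h.symm, fun h => h.trans⟩
  let lev : ι → Quotient level := Quotient.mk level
  let ρ : α → Quotient level → ℝ := fun a k => log (v a k.out)
  obtain ⟨q, p, hq, hsum⟩ := exists_mulVec_eq_comp_and_dotProduct_comp hS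
    (lev := lev) Quotient.mk_surjective (Pi.single (lev b) 1 - Pi.single (lev j) 1)
  refine ⟨p ∘ lev, fun i k hik => congrArg p (Quotient.sound hik), ?_⟩
  have hρ : ∀ i, (fun a => log (v a i) - ρ a (lev i)) =O[l] (1 : α → ℝ) := fun i =>
    log_sub_log_isBigO_one_of_isTheta (level.symm (Quotient.mk_out (s := level) i))
  have hdot : ∀ a, q ⬝ᵥ (fun i => (S *ᵥ v a) i + log (v a i) - t a)
      - q ⬝ᵥ (fun i => log (v a i) - ρ a (lev i)) =
        (p ∘ lev) ⬝ᵥ v a + ρ a (lev b) - ρ a (lev j) := fun a => by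
    have hSv : q ⬝ᵥ S *ᵥ v a = (p ∘ lev) ⬝ᵥ v a := by
      rw [← hq, dotProduct_mulVec, ← mulVec_transpose, show Sᵀ = S from hS.isHermitian]
    have hconst : q ⬝ᵥ (fun _ => t a) = 0 := by
      simpa [Function.comp_def] using hsum fun _ => t a
    have hlog : q ⬝ᵥ (ρ a ∘ lev) = ρ a (lev b) - ρ a (lev j) := by
      simpa [sub_dotProduct] using hsum (ρ a)
    have hsplit : (fun i => (S *ᵥ v a) i + log (v a i) - t a)
        - (fun i => log (v a i) - ρ a (lev i)) = S *ᵥ v a + ρ a ∘ lev - fun _ => t a := by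
      ext i
      simp only [Pi.add_apply, Pi.sub_apply, Function.comp_apply]
      ring
    rw [← dotProduct_sub, hsplit, dotProduct_sub, dotProduct_add, hSv, hconst, hlog]
    ring
  refine (((isBigO_one_dotProduct h q).sub (isBigO_one_dotProduct hρ q)).add
    ((hρ b).sub (hρ j))).congr_left fun a => ?_
  rw [hdot]
  ring

lemma ConstOnGrowthClasses.isBigO_one_dotProduct {U : Ultrafilter α} {v : α → ι → ℝ} {p : ι → ℝ}
    (hp : ConstOnGrowthClasses U v p) (hv : ∀ᶠ a in U, ∀ i, 0 ≤ v a i)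
    (hpv : ∀ i, (1 : α → ℝ) =o[U] (v · i) → (fun a => p ⬝ᵥ v a) =o[U] (v · i)) :
    (fun a => p ⬝ᵥ v a) =O[U] (1 : α → ℝ) := by
  refine .fun_sum fun i _ => ?_
  rcases isBigO_or_isLittleO_ultrafilter U (v · i) (1 : α → ℝ) with hi | hi
  · exact hi.const_mul_left _
  · have hvi : ∀ᶠ a in U, v a i ≠ 0 :=
      (((isLittleO_one_left_iff ℝ).1 hi).eventually_gt_atTop 0).mono fun _ => norm_pos_iff.1
    have hpi : p i = 0 := by
      by_contra hpi
      exact isLittleO_irrefl hvi.frequently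
        ((hp.isBigO_dotProduct hv hpi).trans_isLittleO (hpv i hi))
    simp only [hpi, zero_mul]
    exact isBigO_zero _ _

lemma not_isBigO_one_of_tendsto_atTop {l : Filter α} [l.NeBot] {f : α → ℝ}
    (hf : Tendsto f l atTop) : ¬ f =O[l] (1 : α → ℝ) :=
  ((isLittleO_one_left_iff ℝ).2 (tendsto_norm_atTop_atTop.comp hf)).not_isBigO
    (by simpa using ‹l.NeBot›)

lemma exists_one_isLittleO_of_mulVec_add_log {U : Ultrafilter α} {S : Matrix ι ι ℝ}
    {v : α → ι → ℝ} {t : α → ℝ} (ht : Tendsto t U atTop)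
    (hlow : ∀ i, (1 : α → ℝ) =O[U] (v · i))
    (h : ∀ i, (fun a => (S *ᵥ v a) i + log (v a i) - t a) =O[U] (1 : α → ℝ)) (b : ι) :
    ∃ j, (1 : α → ℝ) =o[U] (v · j) := by
  by_contra! hsmall
  have hbdd : ∀ i, (v · i) =O[U] (1 : α → ℝ) := fun i =>
    (isBigO_or_isLittleO_ultrafilter U _ _).resolve_right (hsmall i)
  have hlog : (fun a => log (v a b)) =O[U] (1 : α → ℝ) := by
    simpa using log_sub_log_isBigO_one_of_isTheta ⟨hbdd b, hlow b⟩
  refine not_isBigO_one_of_tendsto_atTop ht ?_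
  refine (((isBigO_one_dotProduct hbdd (S b)).add hlog).sub (h b)).congr_left fun a => ?_
  rw [mulVec]
  ring

lemma one_isLittleO_of_mulVec_add_log {U : Ultrafilter α} {S : Matrix ι ι ℝ} (hS : S.PosDef)
    {v : α → ι → ℝ} {t : α → ℝ} (ht : Tendsto t U atTop) (hv : ∀ᶠ a in U, ∀ i, 0 ≤ v a i)
    (hlow : ∀ i, (1 : α → ℝ) =O[U] (v · i))
    (h : ∀ i, (fun a => (S *ᵥ v a) i + log (v a i) - t a) =O[U] (1 : α → ℝ)) (b : ι) :
    (1 : α → ℝ) =o[U] (v · b) := by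
  classical
  by_contra hb
  have hbdd : (v · b) =O[U] (1 : α → ℝ) := (isBigO_or_isLittleO_ultrafilter U _ _).resolve_right hb
  have hlogb : (fun a => log (v a b)) =O[U] (1 : α → ℝ) := by
    simpa using log_sub_log_isBigO_one_of_isTheta ⟨hbdd, hlow b⟩
  obtain ⟨k, hk⟩ := exists_one_isLittleO_of_mulVec_add_log ht hlow h b
  obtain ⟨j, hj, hmin⟩ := exists_mem_eventually_forall_mem_le U
    (s := {i | (1 : α → ℝ) =o[U] (v · i)}) ⟨k, by simpa using hk⟩ v
  simp only [Finset.mem_filter_univ] at hj hmin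
  have hvj : Tendsto (v · j) U atTop := ((isLittleO_one_left_iff ℝ).1 hj).congr' <| by
    filter_upwards [hv] with a ha using Real.norm_of_nonneg (ha j)
  obtain ⟨p, hp, hpv⟩ := exists_constOnGrowthClasses_dotProduct_sub_log_isBigO hS h b j
  have hpvj : (fun a => p ⬝ᵥ v a) =o[U] (v · j) := by
    have hlogj : (fun a => log (v a j)) =o[U] (v · j) := isLittleO_log_id_atTop.comp_tendsto hvj
    refine (((hpv.sub hlogb).trans_isLittleO hj).add hlogj).congr_left fun a => ?_
    ring
  have hpv_one : (fun a => p ⬝ᵥ v a) =O[U] (1 : α → ℝ) := by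
    refine hp.isBigO_one_dotProduct hv fun i hi => hpvj.trans_isBigO (.of_bound' ?_)
    filter_upwards [hv, hmin] with a ha hma
    rw [Real.norm_of_nonneg (ha j), Real.norm_of_nonneg (ha i)]
    exact hma i hi
  refine not_isBigO_one_of_tendsto_atTop (tendsto_log_atTop.comp hvj) ?_
  refine ((hpv_one.sub hpv).add hlogb).congr_left fun a => ?_
  simp

lemma submatrix_mulVec_add_sum_compl (S : Matrix ι ι ℝ) (v : ι → ℝ) (P : ι → Prop)
    [DecidablePred P] (i : {i // P i}) :
    (S.submatrix Subtype.val Subtype.val *ᵥ fun k : {i // P i} => v k) i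
      + ∑ k : {i // ¬ P i}, S i k * v k = (S *ᵥ v) i :=
  Fintype.sum_subtype_add_sum_subtype P fun k => S i k * v k

theorem tendsto_zero_or_atTop_of_mulVec_add_log {U : Ultrafilter α} {S : Matrix ι ι ℝ}
    (hS : S.PosDef) {v : α → ι → ℝ} {t : α → ℝ} (ht : Tendsto t U atTop)
    (hv : ∀ᶠ a in U, ∀ i, 0 ≤ v a i)
    (h : ∀ i, (fun a => (S *ᵥ v a) i + log (v a i) - t a) =O[U] (1 : α → ℝ)) (i : ι) :
    Tendsto (v · i) U (𝓝 0) ∨ Tendsto (v · i) U atTop := by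
  classical
  let P : ι → Prop := fun k => (1 : α → ℝ) =O[U] (v · k)
  have hsmall : ∀ k, ¬ P k → (v · k) =o[U] (1 : α → ℝ) := fun k =>
    (isBigO_or_isLittleO_ultrafilter U _ _).resolve_left
  by_cases hi : P i
  · refine .inr (((isLittleO_one_left_iff ℝ).1 ?_).congr' <| by
      filter_upwards [hv] with a ha using Real.norm_of_nonneg (ha i))
    refine one_isLittleO_of_mulVec_add_log (hS.submatrix Subtype.val_injective) ht (b := ⟨i, hi⟩)
      (v := fun a (k : {k // P k}) => v a k) (hv.mono fun a ha k => ha k) (fun k => k.2) fun k => ?_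
    have hrest : (fun a => ∑ l : {l // ¬ P l}, S k l * v a l) =O[U] (1 : α → ℝ) :=
      .fun_sum fun l _ => (hsmall l l.2).isBigO.const_mul_left _
    refine ((h k).sub hrest).congr_left fun a => ?_
    rw [← submatrix_mulVec_add_sum_compl S (v a) P k]
    ring
  · exact .inl ((isLittleO_one_iff ℝ).1 (hsmall i hi))

end GrowthDichotomy

section ExpRemainder

/-- The function `y ↦ (e^y - 1 - y) / y²`, extended continuously by `1 / 2` at the origin.
Replacing it by its value there turns the exponent at the saddle point into a quadratic form. -/
noncomputable def expRemainder : ℝ → ℝ :=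
  Function.update (fun y => (exp y - 1 - y) / y ^ 2) 0 (1 / 2)

lemma expRemainder_zero : expRemainder 0 = 1 / 2 := Function.update_self ..

lemma sq_mul_expRemainder (y : ℝ) : y ^ 2 * expRemainder y = exp y - 1 - y := by
  rcases eq_or_ne y 0 with rfl | hy
  · simp
  · rw [expRemainder, Function.update_of_ne hy, mul_div_cancel₀ _ (pow_ne_zero 2 hy)]

lemma continuous_expRemainder : Continuous expRemainder := by
  refine continuous_iff_continuousAt.2 fun y => ?_
  rcases eq_or_ne y 0 with rfl | hy
  · have htaylor : Tendsto
        (fun y : ℝ => (exp y - ∑ i ∈ Finset.range 3, y ^ i / (i.factorial : ℝ)) / y ^ 2)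
        (𝓝[≠] 0) (𝓝 0) :=
      (exp_sub_sum_range_succ_isLittleO_pow 2).tendsto_div_nhds_zero.mono_left nhdsWithin_le_nhds
    refine continuousAt_update_same.2 (((htaylor.add_const (1 / 2)).congr' ?_).trans_eq (by simp))
    filter_upwards [self_mem_nhdsWithin] with y (hy : y ≠ 0)
    simp only [Finset.sum_range_succ, Finset.sum_range_zero]
    norm_num [Nat.factorial]
    field_simp
    ring
  · refine (continuousAt_update_of_ne hy).2 ?_
    exact ContinuousAt.div (by fun_prop) (by fun_prop) (pow_ne_zero 2 hy)

lemma inv_two_mul_two_add_abs_le_expRemainder (y : ℝ) : (2 * (2 + |y|))⁻¹ ≤ expRemainder y := by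
  rcases eq_or_ne y 0 with rfl | hy
  · norm_num [expRemainder_zero]
  have hy2 : 0 < y ^ 2 := by positivity
  refine le_of_mul_le_mul_left ?_ hy2
  rw [sq_mul_expRemainder, ← div_eq_mul_inv, div_le_iff₀ (by positivity)]
  rcases le_total y (-2) with hy | hy
  · rw [abs_of_nonpos (by linarith)]
    nlinarith [exp_pos y]
  · have hexp : (1 + y / 2) ^ 2 ≤ exp y := by
      calc (1 + y / 2) ^ 2 ≤ exp (y / 2) ^ 2 :=
            pow_le_pow_left₀ (by linarith) (by linarith [add_one_le_exp (y / 2)]) 2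
        _ = exp y := by rw [← exp_nat_mul]; congr 1; push_cast; ring
    nlinarith [abs_nonneg y]

end ExpRemainder

section Gaussian

variable {ι : Type*} [Fintype ι]

open scoped MatrixOrder in
lemma exists_pos_mul_sum_sq_le_dotProduct_mulVec {M : Matrix ι ι ℝ} (hM : M.PosDef) :
    ∃ d > 0, ∀ z : ι → ℝ, d * ∑ i, z i ^ 2 ≤ z ⬝ᵥ M *ᵥ z := by
  classical
  rcases isEmpty_or_nonempty ι with hι | hι
  · exact ⟨1, one_pos, fun z => by simp⟩
  obtain ⟨d, hd, hle⟩ := (CFC.exists_pos_algebraMap_le_iff hM.isHermitian).2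
    fun x hx => hM.isStrictlyPositive.spectrum_pos hx
  refine ⟨d, hd, fun z => ?_⟩
  have hsub := (Matrix.le_iff.1 hle).dotProduct_mulVec_nonneg z
  rw [star_trivial, Algebra.algebraMap_eq_smul_one, sub_mulVec, smul_mulVec, one_mulVec,
    dotProduct_sub, dotProduct_smul, sub_nonneg] at hsub
  simpa only [dotProduct, sq, smul_eq_mul] using hsub

lemma integrable_exp_neg_mul_abs_sub {m : ℝ} (hm : 0 < m) (c : ℝ) :
    Integrable fun x : ℝ => exp (-(m * (|x| - c))) := by
  have h : Integrable fun x : ℝ => exp (-m * |x|) := by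
    refine not_imp_comm.1 integral_undef ?_
    rw [integral_comp_abs (f := fun x => exp (-m * x)), integral_exp_mul_Ioi (by linarith)]
    simp [hm.ne']
  refine (h.mul_const (exp (m * c))).congr (.of_forall fun x => ?_)
  dsimp only
  rw [← exp_add]
  ring_nf

lemma integrable_exp_neg_sum_mul_abs_sub {m : ℝ} (hm : 0 < m) (c : ℝ) :
    Integrable fun x : ι → ℝ => exp (-∑ i, m * (|x i| - c)) := by
  simp_rw [← Finset.sum_neg_distrib, exp_sum]
  exact .fintype_prod fun _ => integrable_exp_neg_mul_abs_sub hm c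

variable [DecidableEq ι]

lemma integral_comp_mulVec {E : Type*} [NormedAddCommGroup E] [NormedSpace ℝ E] {B : Matrix ι ι ℝ}
    (hB : B.det ≠ 0) (f : (ι → ℝ) → E) :
    ∫ x, f (B *ᵥ x) = |B.det|⁻¹ • ∫ x, f x := by
  have hemb : MeasurableEmbedding (toLin' B) :=
    ((toLin' B).equivOfDetNeZero (by simpa using hB)).toContinuousLinearEquiv.toHomeomorph
      |>.measurableEmbedding
  have hmap := hemb.integral_map (μ := volume) f
  rw [Real.map_matrix_volume_pi_eq_smul_volume_pi hB, integral_smul_measure, abs_inv,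
    ENNReal.toReal_ofReal (by positivity)] at hmap
  simpa only [toLin'_apply] using hmap.symm

open scoped MatrixOrder in
lemma exists_det_ne_zero_eq_transpose_mul_self {M : Matrix ι ι ℝ} (hM : M.PosDef) :
    ∃ B : Matrix ι ι ℝ, B.det ≠ 0 ∧ M = Bᵀ * B := by
  obtain ⟨B, hB, hMB⟩ :=
    CStarAlgebra.isStrictlyPositive_iff_eq_star_mul_self.1 hM.isStrictlyPositive
  exact ⟨B, ((isUnit_iff_isUnit_det B).1 hB).ne_zero, hMB⟩

lemma integral_exp_neg_half_dotProduct_mulVec {M : Matrix ι ι ℝ} (hM : M.PosDef) :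
    ∫ x : ι → ℝ, exp (-(1 / 2 * (x ⬝ᵥ M *ᵥ x))) =
      (2 * π) ^ (Fintype.card ι / 2 : ℝ) * M.det ^ (-1 / 2 : ℝ) := by
  obtain ⟨B, hB, rfl⟩ := exists_det_ne_zero_eq_transpose_mul_self hM
  have hquad : ∀ x, x ⬝ᵥ (Bᵀ * B) *ᵥ x = ∑ i, (B *ᵥ x) i ^ 2 := fun x => by
    rw [← mulVec_mulVec, dotProduct_mulVec, vecMul_transpose]
    simp only [dotProduct, sq]
  have hdet : |B.det|⁻¹ = (Bᵀ * B).det ^ (-1 / 2 : ℝ) := by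
    rw [det_mul, det_transpose, ← sq, ← sq_abs, ← rpow_natCast, ← rpow_mul (abs_nonneg _),
      ← rpow_neg_one]
    norm_num
  have hstd : ∫ y : ι → ℝ, exp (-(1 / 2 * ∑ i, y i ^ 2)) = (2 * π) ^ (Fintype.card ι / 2 : ℝ) := by
    simp_rw [Finset.mul_sum, ← Finset.sum_neg_distrib, exp_sum, ← neg_mul]
    rw [integral_fintype_prod_volume_eq_prod (fun _ (x : ℝ) => exp (-(1 / 2) * x ^ 2)),
      integral_gaussian, Finset.prod_const, Finset.card_univ, sqrt_eq_rpow, ← rpow_natCast,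
      ← rpow_mul (by positivity)]
    congr 1 <;> ring
  simp_rw [hquad]
  rw [integral_comp_mulVec hB fun y => exp (-(1 / 2 * ∑ i, y i ^ 2)), hstd, hdet, smul_eq_mul,
    mul_comm]

end Gaussian

lemma exists_tendsto_inv_sqrt_one_add {α ι : Type*} {l : Filter α} {w : α → ι → ℝ}
    (hw : ∀ i, Tendsto (w · i) l (𝓝 0) ∨ Tendsto (w · i) l atTop) :
    ∃ e : ι → ℝ, (∀ i, e i = 0 ∨ e i = 1) ∧ Tendsto (fun a i => (√(1 + w a i))⁻¹) l (𝓝 e) := by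
  have hcoord : ∀ i, ∃ c : ℝ, (c = 0 ∨ c = 1) ∧
      Tendsto (fun a => (√(1 + w a i))⁻¹) l (𝓝 c) := fun i => by
    rcases hw i with hi | hi
    · exact ⟨1, .inr rfl, by simpa using (hi.const_add 1).sqrt.inv₀ (by simp)⟩
    · exact ⟨0, .inl rfl, tendsto_inv_atTop_zero.comp
        (tendsto_sqrt_atTop.comp (tendsto_atTop_add_const_left l 1 hi))⟩
  choose e he htendsto using hcoord
  exact ⟨e, he, tendsto_pi_nhds.2 htendsto⟩

section LaplaceIntegral

variable {ι : Type*} [Fintype ι]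

/-- Numerator and denominator of the correction factor: with `g = expRemainder` the exponent is
exact, with `g = 1 / 2` it is its quadratic approximation; `w` collects the diagonal entries of
the matrix `Λ`. -/
noncomputable def laplaceIntegral (D : Matrix ι ι ℝ) (g : ℝ → ℝ) (w : ι → ℝ) : ℝ :=
  ∫ y : ι → ℝ, exp (-(∑ i, w i * (y i ^ 2 * g (y i)) + 1 / 2 * (y ⬝ᵥ D *ᵥ y)))

/-- The integral `laplaceIntegral D g w` in the coordinates `z i = y i / s i`, without the Jacobian,
where `s i = (1 + w i) ^ (-1 / 2)`. The limits `w i → ∞` become the faces `s i = 0`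
of the unit cube. -/
noncomputable def scaledLaplaceIntegral (D : Matrix ι ι ℝ) (g : ℝ → ℝ) (s : ι → ℝ) : ℝ :=
  ∫ z : ι → ℝ,
    exp (-(∑ i, (1 - s i ^ 2) * (z i ^ 2 * g (s i * z i)) + 1 / 2 * ((s * z) ⬝ᵥ D *ᵥ (s * z))))

lemma laplaceIntegral_eq_abs_prod_mul (D : Matrix ι ι ℝ) (g : ℝ → ℝ) {s w : ι → ℝ}
    (hsw : ∀ i, s i ^ 2 * (1 + w i) = 1) :
    laplaceIntegral D g w = |∏ i, s i| * scaledLaplaceIntegral D g s := by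
  classical
  have hs : (diagonal s).det ≠ 0 := by
    rw [det_diagonal]
    exact Finset.prod_ne_zero_iff.2 fun i _ hi => by simpa [hi] using hsw i
  have hcomp := integral_comp_mulVec hs fun y : ι → ℝ =>
    exp (-(∑ i, w i * (y i ^ 2 * g (y i)) + 1 / 2 * (y ⬝ᵥ D *ᵥ y)))
  have hscale : ∀ z : ι → ℝ, diagonal s *ᵥ z = s * z := fun z => funext (mulVec_diagonal s z)
  simp only [hscale, det_diagonal, Pi.mul_apply] at hcomp hs
  have hweight : ∀ i, 1 - s i ^ 2 = w i * s i ^ 2 := fun i => by linarith [hsw i]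
  simp only [laplaceIntegral, scaledLaplaceIntegral, hweight]
  simp only [mul_pow, ← mul_assoc] at hcomp ⊢
  rw [hcomp, smul_eq_mul, mul_inv_cancel_left₀ (abs_ne_zero.2 hs)]

-- The left side does not depend on `s`, so it yields a dominating function on the whole cube.
lemma mul_abs_sub_two_le {d s z γ : ℝ} (hd : 0 < d) (hs : s ∈ Set.Icc (0 : ℝ) 1)
    (hγ : (2 * (2 + |s * z|))⁻¹ ≤ γ) :
    min 1 d / 2 * (|z| - 2) ≤ (1 - s ^ 2) * (z ^ 2 * γ) + 1 / 2 * (d * (s * z) ^ 2) := by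
  have hs2 : 0 ≤ 1 - s ^ 2 := by nlinarith [hs.1, hs.2]
  have hγz : (2 * (2 + |z|))⁻¹ ≤ γ := by
    refine le_trans ?_ hγ
    rw [abs_mul, abs_of_nonneg hs.1]
    gcongr
    · linarith [mul_nonneg hs.1 (abs_nonneg z)]
    · exact mul_le_of_le_one_left (abs_nonneg z) hs.2
  calc min 1 d / 2 * (|z| - 2) ≤ min 1 d / 2 * (z ^ 2 / (2 + |z|)) := by
        gcongr
        rw [le_div_iff₀ (by positivity), ← sq_abs z]
        nlinarith
    _ = (1 - s ^ 2) * (z ^ 2 * (min 1 d * (2 * (2 + |z|))⁻¹))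
          + 1 / 2 * (min 1 d * (s ^ 2 * (z ^ 2 / (2 + |z|)))) := by
        field_simp
        ring
    _ ≤ (1 - s ^ 2) * (z ^ 2 * γ) + 1 / 2 * (d * (s * z) ^ 2) := by
        rw [mul_pow s z]
        gcongr
        · exact (mul_le_of_le_one_left (by positivity) (min_le_left 1 d)).trans hγz
        · exact min_le_right 1 d
        · exact div_le_self (by positivity) (by linarith [abs_nonneg z])

lemma exists_integrable_bound_scaledLaplaceIntegral {D : Matrix ι ι ℝ} (hD : D.PosDef)
    {g : ℝ → ℝ} (hg : ∀ y, (2 * (2 + |y|))⁻¹ ≤ g y) :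
    ∃ bound : (ι → ℝ) → ℝ, Integrable bound ∧ ∀ s ∈ Set.Icc (0 : ι → ℝ) 1, ∀ z,
      ‖exp (-(∑ i, (1 - s i ^ 2) * (z i ^ 2 * g (s i * z i))
        + 1 / 2 * ((s * z) ⬝ᵥ D *ᵥ (s * z))))‖ ≤ bound z := by
  obtain ⟨d, hd, hcoercive⟩ := exists_pos_mul_sum_sq_le_dotProduct_mulVec hD
  refine ⟨_, integrable_exp_neg_sum_mul_abs_sub (m := min 1 d / 2) (by positivity) 2,
    fun s hs z => ?_⟩
  rw [norm_of_nonneg (exp_nonneg _)]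
  gcongr
  calc ∑ i, min 1 d / 2 * (|z i| - 2)
      ≤ ∑ i, ((1 - s i ^ 2) * (z i ^ 2 * g (s i * z i)) + 1 / 2 * (d * (s i * z i) ^ 2)) :=
        Finset.sum_le_sum fun i _ => mul_abs_sub_two_le hd ⟨hs.1 i, hs.2 i⟩ (hg _)
    _ = ∑ i, (1 - s i ^ 2) * (z i ^ 2 * g (s i * z i)) + 1 / 2 * (d * ∑ i, (s * z) i ^ 2) := by
        simp only [Finset.sum_add_distrib, Finset.mul_sum, Pi.mul_apply]
    _ ≤ _ := by gcongr; exact hcoercive _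

lemma continuousOn_scaledLaplaceIntegral {D : Matrix ι ι ℝ} (hD : D.PosDef) {g : ℝ → ℝ}
    (hgc : Continuous g) (hg : ∀ y, (2 * (2 + |y|))⁻¹ ≤ g y) :
    ContinuousOn (scaledLaplaceIntegral D g) (Set.Icc 0 1) := by
  obtain ⟨bound, hbound, hle⟩ := exists_integrable_bound_scaledLaplaceIntegral hD hg
  refine continuousOn_of_dominated (bound := bound) (fun s _ => ?_)
    (fun s hs => .of_forall (hle s hs)) hbound (.of_forall fun z => ?_)
  · exact Continuous.aestronglyMeasurable (by fun_prop)
  · exact Continuous.continuousOn (by fun_prop)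

lemma scaledLaplaceIntegral_pos {D : Matrix ι ι ℝ} (hD : D.PosDef) {g : ℝ → ℝ}
    (hgc : Continuous g) (hg : ∀ y, (2 * (2 + |y|))⁻¹ ≤ g y) {s : ι → ℝ}
    (hs : s ∈ Set.Icc (0 : ι → ℝ) 1) : 0 < scaledLaplaceIntegral D g s := by
  obtain ⟨bound, hbound, hle⟩ := exists_integrable_bound_scaledLaplaceIntegral hD hg
  refine integral_exp_pos (hbound.mono' ?_ (.of_forall (hle s hs)))
  exact Continuous.aestronglyMeasurable (by fun_prop)

lemma scaledLaplaceIntegral_congr_of_vertex (D : Matrix ι ι ℝ) {g₁ g₂ : ℝ → ℝ} (h : g₁ 0 = g₂ 0)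
    {s : ι → ℝ} (hs : ∀ i, s i = 0 ∨ s i = 1) :
    scaledLaplaceIntegral D g₁ s = scaledLaplaceIntegral D g₂ s := by
  have hterm : ∀ (z : ι → ℝ) i, (1 - s i ^ 2) * (z i ^ 2 * g₁ (s i * z i)) =
      (1 - s i ^ 2) * (z i ^ 2 * g₂ (s i * z i)) := fun z i => by
    rcases hs i with hi | hi <;> simp [hi, h]
  simp only [scaledLaplaceIntegral, hterm]

theorem tendsto_laplaceIntegral_div_laplaceIntegral {D : Matrix ι ι ℝ} (hD : D.PosDef)
    {g₁ g₂ : ℝ → ℝ} (hc₁ : Continuous g₁) (hc₂ : Continuous g₂)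
    (hg₁ : ∀ y, (2 * (2 + |y|))⁻¹ ≤ g₁ y) (hg₂ : ∀ y, (2 * (2 + |y|))⁻¹ ≤ g₂ y) (h0 : g₁ 0 = g₂ 0)
    {α : Type*} {l : Filter α} {w : α → ι → ℝ} (hw : ∀ᶠ a in l, ∀ i, 0 ≤ w a i)
    (hlim : ∀ i, Tendsto (w · i) l (𝓝 0) ∨ Tendsto (w · i) l atTop) :
    Tendsto (fun a => laplaceIntegral D g₁ (w a) / laplaceIntegral D g₂ (w a)) l (𝓝 1) := by
  obtain ⟨e, he, hse⟩ := exists_tendsto_inv_sqrt_one_add hlim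
  set s : α → ι → ℝ := fun a i => (√(1 + w a i))⁻¹
  have hscube : ∀ᶠ a in l, s a ∈ Set.Icc (0 : ι → ℝ) 1 := by
    filter_upwards [hw] with a ha
    refine ⟨fun i => by positivity, fun i => inv_le_one_of_one_le₀ ?_⟩
    exact one_le_sqrt.2 (le_add_of_nonneg_right (ha i))
  have hecube : e ∈ Set.Icc (0 : ι → ℝ) 1 := by
    constructor <;> intro i <;> rcases he i with hi | hi <;> simp [hi]
  have hse_cube : Tendsto s l (𝓝[Set.Icc 0 1] e) := tendsto_nhdsWithin_iff.2 ⟨hse, hscube⟩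
  have hratio : Tendsto
      (fun a => scaledLaplaceIntegral D g₁ (s a) / scaledLaplaceIntegral D g₂ (s a)) l (𝓝 1) := by
    have hpos := scaledLaplaceIntegral_pos hD hc₂ hg₂ hecube
    have hdiv :=
      ((continuousOn_scaledLaplaceIntegral hD hc₁ hg₁ e hecube).tendsto.comp hse_cube).div
        ((continuousOn_scaledLaplaceIntegral hD hc₂ hg₂ e hecube).tendsto.comp hse_cube) hpos.ne'
    rwa [scaledLaplaceIntegral_congr_of_vertex D h0 he, div_self hpos.ne'] at hdiv
  refine hratio.congr' ?_
  filter_upwards [hw] with a ha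
  have hsw : ∀ i, s a i ^ 2 * (1 + w a i) = 1 := fun i => by
    have hpos : 0 < 1 + w a i := by linarith [ha i]
    rw [inv_pow, sq_sqrt hpos.le, inv_mul_cancel₀ hpos.ne']
  have hprod : |∏ i, s a i| ≠ 0 := abs_ne_zero.2 <| Finset.prod_ne_zero_iff.2 fun i _ hi => by
    simpa [hi] using hsw i
  rw [laplaceIntegral_eq_abs_prod_mul D g₁ hsw, laplaceIntegral_eq_abs_prod_mul D g₂ hsw,
    mul_div_mul_left _ _ hprod]

end LaplaceIntegral

section Lognormal

variable {ι : Type*} [Fintype ι]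

/-- Diagonal of the matrix `Λ = θ diag(e^{μ + x})`, at an arbitrary point `x`. The saddle point
equation reads `saddleWeight μ θ x + D *ᵥ x = 0`. -/
noncomputable def saddleWeight (μ : ι → ℝ) (θ : ℝ) (x : ι → ℝ) : ι → ℝ :=
  fun i => θ * exp (μ i + x i)

lemma saddle_exponent_add_eq {D : Matrix ι ι ℝ} (hD : Dᵀ = D) {μ : ι → ℝ} {θ : ℝ} {x : ι → ℝ}
    (hx : saddleWeight μ θ x + D *ᵥ x = 0) (y : ι → ℝ) :
    θ * ∑ i, exp (μ i + (y + x) i) + 1 / 2 * ((y + x) ⬝ᵥ D *ᵥ (y + x)) =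
      ∑ i, saddleWeight μ θ x i * (y i ^ 2 * expRemainder (y i)) + 1 / 2 * (y ⬝ᵥ D *ᵥ y)
        - (1 - (1 / 2 : ℝ) • x) ⬝ᵥ D *ᵥ x := by
  have hDx : D *ᵥ x = -saddleWeight μ θ x := eq_neg_of_add_eq_zero_right hx
  have hsymm : x ⬝ᵥ D *ᵥ y = y ⬝ᵥ D *ᵥ x := by
    rw [dotProduct_mulVec, ← mulVec_transpose, hD, dotProduct_comm]
  have hquad : (y + x) ⬝ᵥ D *ᵥ (y + x) = y ⬝ᵥ D *ᵥ y + 2 * (y ⬝ᵥ D *ᵥ x) + x ⬝ᵥ D *ᵥ x := by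
    rw [mulVec_add, dotProduct_add, add_dotProduct, add_dotProduct, hsymm]
    ring
  have hexp : θ * ∑ i, exp (μ i + (y + x) i) = ∑ i, saddleWeight μ θ x i * exp (y i) := by
    rw [Finset.mul_sum]
    refine Finset.sum_congr rfl fun i _ => ?_
    rw [saddleWeight, mul_assoc, ← exp_add, Pi.add_apply]
    ring_nf
  have hremainder : ∑ i, saddleWeight μ θ x i * (y i ^ 2 * expRemainder (y i)) =
      ∑ i, saddleWeight μ θ x i * exp (y i) + 1 ⬝ᵥ D *ᵥ x + y ⬝ᵥ D *ᵥ x := by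
    simp only [hDx, dotProduct, sq_mul_expRemainder, ← Finset.sum_add_distrib, Pi.neg_apply,
      Pi.one_apply]
    exact Finset.sum_congr rfl fun i _ => by ring
  rw [hquad, hexp, hremainder, sub_dotProduct, smul_dotProduct, smul_eq_mul]
  ring

lemma integral_exp_neg_eq_exp_mul_laplaceIntegral {D : Matrix ι ι ℝ} (hD : Dᵀ = D) {μ : ι → ℝ}
    {θ : ℝ} {x : ι → ℝ} (hx : saddleWeight μ θ x + D *ᵥ x = 0) :
    ∫ y : ι → ℝ, exp (-(θ * ∑ i, exp (μ i + y i) + 1 / 2 * (y ⬝ᵥ D *ᵥ y))) =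
      exp ((1 - (1 / 2 : ℝ) • x) ⬝ᵥ D *ᵥ x) *
        laplaceIntegral D expRemainder (saddleWeight μ θ x) := by
  rw [laplaceIntegral, ← integral_const_mul, ← integral_add_right_eq_self _ x]
  simp only [saddle_exponent_add_eq hD hx, neg_sub, ← exp_add, ← sub_eq_add_neg]

variable [DecidableEq ι]

lemma laplaceIntegral_half {D : Matrix ι ι ℝ} (hD : D.PosDef) {w : ι → ℝ} (hw : ∀ i, 0 ≤ w i) :
    laplaceIntegral D (fun _ => 1 / 2) w =
      (2 * π) ^ (Fintype.card ι / 2 : ℝ) * (D + diagonal w).det ^ (-1 / 2 : ℝ) := by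
  have hquad : ∀ y : ι → ℝ, ∑ i, w i * (y i ^ 2 * (1 / 2)) + 1 / 2 * (y ⬝ᵥ D *ᵥ y) =
      1 / 2 * (y ⬝ᵥ (D + diagonal w) *ᵥ y) := fun y => by
    have hdiag : y ⬝ᵥ diagonal w *ᵥ y = ∑ i, w i * y i ^ 2 :=
      Finset.sum_congr rfl fun i _ => by rw [mulVec_diagonal]; ring
    rw [add_mulVec, dotProduct_add, hdiag, mul_add, Finset.mul_sum, add_comm]
    congr 1
    exact Finset.sum_congr rfl fun i _ => by ring
  simp only [laplaceIntegral, hquad]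
  exact integral_exp_neg_half_dotProduct_mulVec (hD.add_posSemidef (.diagonal hw))

/-- The Laplace transform `L(θ)` of `∑ i, e^{X i}` for `X ∼ N(μ, S)`. -/
noncomputable def lognormalLaplace (μ : ι → ℝ) (S : Matrix ι ι ℝ) (θ : ℝ) : ℝ :=
  (2 * π) ^ (-(Fintype.card ι : ℝ) / 2) * S.det ^ (-1 / 2 : ℝ) *
    ∫ x : ι → ℝ, exp (-(θ * ∑ i, exp (μ i + x i) + 1 / 2 * (x ⬝ᵥ S⁻¹ *ᵥ x)))

/-- The approximation `L̃(θ)`, with the saddle point `x*(θ)` as an explicit argument `x`. -/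
noncomputable def laplaceApprox (μ : ι → ℝ) (S : Matrix ι ι ℝ) (θ : ℝ) (x : ι → ℝ) : ℝ :=
  (1 + S * diagonal (saddleWeight μ θ x)).det ^ (-1 / 2 : ℝ) *
    exp ((1 - (1 / 2 : ℝ) • x) ⬝ᵥ S⁻¹ *ᵥ x)

lemma lognormalLaplace_div_laplaceApprox {μ : ι → ℝ} {S : Matrix ι ι ℝ} (hS : S.PosDef) {θ : ℝ}
    (hθ : 0 ≤ θ) {x : ι → ℝ} (hx : saddleWeight μ θ x + S⁻¹ *ᵥ x = 0) :
    lognormalLaplace μ S θ / laplaceApprox μ S θ x =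
      laplaceIntegral S⁻¹ expRemainder (saddleWeight μ θ x) /
        laplaceIntegral S⁻¹ (fun _ => 1 / 2) (saddleWeight μ θ x) := by
  have hw : ∀ i, 0 ≤ saddleWeight μ θ x i := fun i => mul_nonneg hθ (exp_nonneg _)
  have hsum : (S⁻¹ + diagonal (saddleWeight μ θ x)).PosDef :=
    hS.inv.add_posSemidef (.diagonal hw)
  have hdet : (1 + S * diagonal (saddleWeight μ θ x)).det =
      S.det * (S⁻¹ + diagonal (saddleWeight μ θ x)).det := by
    rw [← det_mul, mul_add, mul_nonsing_inv _ hS.det_pos.ne'.isUnit]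
  have hSdet := hS.det_pos
  have hsumdet := hsum.det_pos
  have hsymm : S⁻¹ᵀ = S⁻¹ := hS.inv.isHermitian
  rw [lognormalLaplace, laplaceApprox, hdet, mul_rpow hSdet.le hsumdet.le,
    integral_exp_neg_eq_exp_mul_laplaceIntegral hsymm hx, laplaceIntegral_half hS.inv hw,
    neg_div, rpow_neg (by positivity)]
  field_simp

lemma mulVec_saddleWeight_add_log {μ : ι → ℝ} {S : Matrix ι ι ℝ} (hS : S.det ≠ 0) {θ : ℝ}
    (hθ : θ ≠ 0) {x : ι → ℝ} (hx : saddleWeight μ θ x + S⁻¹ *ᵥ x = 0) (i : ι) :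
    (S *ᵥ saddleWeight μ θ x) i + log (saddleWeight μ θ x i) = log θ + μ i := by
  have hSw : S *ᵥ saddleWeight μ θ x = -x := by
    rw [eq_neg_of_add_eq_zero_left hx, mulVec_neg, mulVec_mulVec, mul_nonsing_inv _ hS.isUnit,
      one_mulVec]
  rw [hSw, saddleWeight, log_mul hθ (exp_ne_zero _), log_exp, Pi.neg_apply]
  ring

theorem correction_factor_tendsto_one_general (μ : ι → ℝ) {S : Matrix ι ι ℝ} (hS : S.PosDef)
    {xs : ℝ → ι → ℝ} (hxs : ∀ᶠ θ in atTop, saddleWeight μ θ (xs θ) + S⁻¹ *ᵥ xs θ = 0) :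
    Tendsto (fun θ => lognormalLaplace μ S θ / laplaceApprox μ S θ (xs θ)) atTop (𝓝 1) := by
  refine (tendsto_iff_ultrafilter _ _ _).2 fun U hU => ?_
  have hpos : ∀ᶠ θ : ℝ in U, 0 < θ := hU (eventually_gt_atTop 0)
  have hw : ∀ᶠ θ in U, ∀ i, 0 ≤ saddleWeight μ θ (xs θ) i :=
    hpos.mono fun θ hθ i => mul_nonneg hθ.le (exp_nonneg _)
  have hsaddle : ∀ i, (fun θ => (S *ᵥ saddleWeight μ θ (xs θ)) i
      + log (saddleWeight μ θ (xs θ) i) - log θ) =O[U] (1 : ℝ → ℝ) := fun i => by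
    refine (isBigO_const_const (μ i) one_ne_zero (U : Filter ℝ)).congr' ?_ .rfl
    filter_upwards [hpos, hU hxs] with θ hθ hx
    rw [mulVec_saddleWeight_add_log hS.det_pos.ne' hθ.ne' hx, add_sub_cancel_left]
  have hlim :=
    tendsto_zero_or_atTop_of_mulVec_add_log hS (tendsto_log_atTop.mono_left hU) hw hsaddle
  have hhalf : ∀ y : ℝ, (2 * (2 + |y|))⁻¹ ≤ 1 / 2 := fun y => by
    rw [one_div]
    gcongr
    linarith [abs_nonneg y]
  refine (tendsto_laplaceIntegral_div_laplaceIntegral hS.inv continuous_expRemainder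
    continuous_const inv_two_mul_two_add_abs_le_expRemainder hhalf expRemainder_zero hw
    hlim).congr' ?_
  filter_upwards [hpos, hU hxs] with θ hθ hx
  exact (lognormalLaplace_div_laplaceApprox hS hθ.le hx).symm

end Lognormal

/-- `I(θ) = L(θ)/L̃(θ) → 1` as `θ → ∞`, where
`L(θ) = (2π)^{-n/2} (det Σ)^{-1/2} ∫ exp{−h_θ(x)} dx` and
`L̃(θ) = det(I + ΣΛ(θ))^{-1/2} exp{(1 − ½x*(θ))ᵀ D x*(θ)}` with
`Λ(θ) = θ diag(e^{μ + x*(θ)})` and `x*(θ)` the solution of `θ e^{μ+x} + Dx = 0`. -/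
theorem correction_factor_tendsto_one
    (n : ℕ) (hn : 1 ≤ n) (μ : Fin n → ℝ) (Sig : Matrix (Fin n) (Fin n) ℝ)
    (hSig : Sig.PosDef)
    (D : Matrix (Fin n) (Fin n) ℝ) (hD : D = Sig⁻¹)
    (xs : ℝ → Fin n → ℝ)
    (hxs : ∀ θ > (0 : ℝ), ∀ i, θ * Real.exp (μ i + xs θ i) + D.mulVec (xs θ) i = 0) :
    Tendsto
      (fun θ : ℝ =>
        ((2 * π) ^ (-(n : ℝ) / 2) * Sig.det ^ (-(1 : ℝ) / 2) *
            ∫ x : Fin n → ℝ,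
              Real.exp (-(θ * ∑ i, Real.exp (μ i + x i) +
                (1 / 2) * (x ⬝ᵥ D.mulVec x)))) /
          ((1 + Sig * Matrix.diagonal fun i => θ * Real.exp (μ i + xs θ i)).det
              ^ (-(1 : ℝ) / 2) *
            Real.exp ((1 - (1 / 2 : ℝ) • xs θ) ⬝ᵥ D.mulVec (xs θ))))
      atTop (nhds 1) := by
  subst hD
  have hlim := correction_factor_tendsto_one_general μ hSig
    ((eventually_gt_atTop 0).mono fun θ hθ => funext (hxs θ hθ))
  simp only [lognormalLaplace, laplaceApprox, Fintype.card_fin] at hlim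
  exact hlim
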